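/- arXiv:1905.00212 — 3 statements merged into one kernel-verified Lean document; each statement's English description precedes it below -/
import Mathlib

section
/- The automorphism group of the graph Π_I is isomorphic to the alternating group A₅ on 5 letters. -/
/-- The ten faces of the hemi-icosahedron on vertex set `Fin 6`. -/
def faces : Finset (Finset (Fin 6)) :=
  {{0,1,2}, {0,2,3}, {0,3,4}, {0,4,5}, {0,5,1}, {1,2,4}, {2,3,5}, {1,3,4}, {2,4,5}, {1,3,5}}

/-- The 16-element vertex set: `Fin 6` together with the ten faces. -/
abbrev V16 := Fin 6 ⊕ {f : Finset (Fin 6) // f ∈ faces}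

/-- Vertex-face incidence: `v : Fin 6` is incident to a face `f` iff `v ∈ f`. -/
def piRel : V16 → V16 → Prop := fun a b =>
  match a, b with
  | Sum.inl v, Sum.inr f => v ∈ f.1
  | _, _ => False

instance : DecidableRel piRel := fun a b =>
  match a, b with
  | Sum.inl v, Sum.inr f => inferInstanceAs (Decidable (v ∈ f.1))
  | Sum.inl _, Sum.inl _ => Decidable.isFalse id
  | Sum.inr _, Sum.inl _ => Decidable.isFalse id
  | Sum.inr _, Sum.inr _ => Decidable.isFalse id

/-- `Π_I`, the projective vertex-face graph of the icosahedron (vertex-face graph of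
the hemi-icosahedron): `v : Fin 6` is adjacent to `f ∈ faces` iff `v ∈ f`. -/
def piI : SimpleGraph V16 := SimpleGraph.fromRel piRel

instance : DecidableRel piI.Adj := fun a b =>
  decidable_of_iff _ (SimpleGraph.fromRel_adj piRel a b).symm

/-!
A vertex of `Π_I` has degree 5 and a face degree 3, so an automorphism is the same thing as a
permutation of the six vertices preserving the set of faces. Such a symmetry is determined by its
values on one face, because every edge lies on only two faces; as there are `10 * 3!` ordered
faces, the symmetry group has order at most 60.

The hemi-icosahedron has 15 edges, falling into 5 frames of three mutually orthogonal edges.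
The symmetry group permutes these frames transitively, hence primitively since 5 is prime, and the
rotation about a face permutes them by a 3-cycle. By Jordan's theorem it induces every even
permutation of the frames, and since `A₅` already has order 60 it induces nothing else and acts
faithfully.
-/

open Equiv MulAction
open scoped Finset Pointwise

section PrimeDegree

variable {G α : Type*} [Group G] [MulAction G α] [Fintype α] [DecidableEq α]

theorem alternatingGroup_le_range_toPermHom [IsPretransitive G α] (hα : (Nat.card α).Prime)
    {g : G} (hg : (toPerm g : Perm α).IsThreeCycle) :
    alternatingGroup α ≤ (toPermHom G α).range := by
  have : IsPretransitive (toPermHom G α).range α :=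
    ⟨fun x y ↦ (exists_smul_eq G x y).imp' (toPermHom G α).rangeRestrict fun _ h ↦ h⟩
  exact Perm.alternatingGroup_le_of_isPreprimitive_of_isThreeCycle_mem
    (IsPreprimitive.of_prime_card hα) hg ⟨g, rfl⟩

theorem nonempty_mulEquiv_alternatingGroup [Finite G] [IsPretransitive G α]
    (hα : (Nat.card α).Prime) {g : G} (hg : (toPerm g : Perm α).IsThreeCycle)
    (hG : Nat.card G ≤ Nat.card (alternatingGroup α)) :
    Nonempty (G ≃* alternatingGroup α) := by
  let φ := toPermHom G α
  have hle : alternatingGroup α ≤ φ.range := alternatingGroup_le_range_toPermHom hα hg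
  have hcard : Nat.card φ.range ≤ Nat.card G :=
    Nat.card_le_card_of_surjective _ φ.rangeRestrict_surjective
  have hrange : alternatingGroup α = φ.range :=
    Subgroup.eq_of_le_of_card_ge hle (hcard.trans hG)
  have hbij : Function.Bijective φ.rangeRestrict :=
    φ.rangeRestrict_surjective.bijective_of_nat_card_le (hrange ▸ hG)
  exact ⟨(MulEquiv.ofBijective _ hbij).trans (MulEquiv.subgroupCongr hrange.symm)⟩

end PrimeDegree

/-- The action of the setwise stabilizer of a finset on its elements. -/
instance stabilizerFinsetMulAction {G β : Type*} [Group G] [MulAction G β] [DecidableEq β]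
    (s : Finset β) : MulAction (stabilizer G s) s where
  smul g x := ⟨(g : G) • (x : β), mem_stabilizer_finset'.1 g.2 x.2⟩
  one_smul x := Subtype.ext (one_smul G (x : β))
  mul_smul g h x := Subtype.ext (mul_smul (g : G) h (x : β))

section IncidenceGraph

variable {α : Type*}

/-- The vertex-face incidence graph (Levi graph) of a finite set system. -/
def incidenceGraph (F : Finset (Finset α)) : SimpleGraph (α ⊕ F) where
  Adj
    | .inl a, .inr f | .inr f, .inl a => a ∈ f.1
    | _, _ => False
  symm := ⟨by rintro (a | f) (b | g) h <;> exact h⟩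
  loopless := ⟨by rintro (a | f) h <;> exact h⟩

theorem ncard_neighborSet_inr (F : Finset (Finset α)) (f : F) :
    ((incidenceGraph F).neighborSet (.inr f)).ncard = #f.1 := by
  have : (incidenceGraph F).neighborSet (.inr f) = Sum.inl '' (f.1 : Set α) := by
    ext (a | g) <;> simp [incidenceGraph]
  rw [this, Set.ncard_image_of_injective _ Sum.inl_injective, Set.ncard_coe_finset]

variable [DecidableEq α]

theorem ncard_neighborSet_inl (F : Finset (Finset α)) (a : α) :
    ((incidenceGraph F).neighborSet (.inl a)).ncard = #{f ∈ F | a ∈ f} := by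
  have : (incidenceGraph F).neighborSet (.inl a) =
      Sum.inr '' (Subtype.val ⁻¹' ({f ∈ F | a ∈ f} : Finset (Finset α))) := by
    ext (b | g) <;> simp [incidenceGraph]
  rw [this, Set.ncard_image_of_injective _ Sum.inr_injective,
    Set.ncard_preimage_of_injective_subset_range Subtype.val_injective, Set.ncard_coe_finset]
  intro f hf
  exact ⟨⟨f, (Finset.mem_filter.1 hf).1⟩, rfl⟩

variable {F : Finset (Finset α)}

theorem mapsTo_range_inl_of_card_ne_card (hF : ∀ a, ∀ f ∈ F, #{g ∈ F | a ∈ g} ≠ #f)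
    (φ : incidenceGraph F ≃g incidenceGraph F) :
    Set.MapsTo φ (Set.range Sum.inl) (Set.range Sum.inl) := by
  rintro _ ⟨a, rfl⟩
  rcases hφ : φ (.inl a) with b | f
  · exact ⟨b, rfl⟩
  · have hcard := Nat.card_congr (φ.mapNeighborSet (.inl a))
    rw [hφ, Nat.card_coe_set_eq, Nat.card_coe_set_eq, ncard_neighborSet_inl,
      ncard_neighborSet_inr] at hcard
    exact absurd hcard (hF a f f.2)

variable (F) in
/-- A permutation of the points preserving the set system, as an automorphism of the
incidence graph. -/
def stabilizerToIncidenceGraphAut :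
    stabilizer (Perm α) F →* (incidenceGraph F ≃g incidenceGraph F) where
  toFun σ :=
    { toEquiv := Equiv.sumCongr σ (toPerm σ)
      map_rel_iff' := by
        rintro (a | f) (b | g)
        · exact Iff.rfl
        · exact Finset.smul_mem_smul_finset_iff (σ : Perm α)
        · exact Finset.smul_mem_smul_finset_iff (σ : Perm α)
        · exact Iff.rfl }
  map_one' := by
    ext (a | f)
    · rfl
    · exact congrArg Sum.inr (one_smul (stabilizer (Perm α) F) f)
  map_mul' σ τ := by
    ext (a | f)
    · rfl
    · exact congrArg Sum.inr (mul_smul σ τ f)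

theorem stabilizerToIncidenceGraphAut_injective :
    Function.Injective (stabilizerToIncidenceGraphAut F) := fun _ _ h ↦
  Subtype.ext <| Equiv.ext fun a ↦ Sum.inl_injective (DFunLike.congr_fun h (.inl a))

theorem stabilizerToIncidenceGraphAut_surjective [Finite α]
    (hF : ∀ a, ∀ f ∈ F, #{g ∈ F | a ∈ g} ≠ #f) :
    Function.Surjective (stabilizerToIncidenceGraphAut F) := by
  intro φ
  obtain ⟨⟨σ, τ⟩, hφ⟩ := Perm.mem_sumCongrHom_range_of_perm_mapsTo_inl (σ := φ.toEquiv)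
    (mapsTo_range_inl_of_card_ne_card hF φ)
  have hl (a : α) : φ (.inl a) = .inl (σ a) := (DFunLike.congr_fun hφ (.inl a)).symm
  have hr (f : F) : φ (.inr f) = .inr (τ f) := (DFunLike.congr_fun hφ (.inr f)).symm
  have hmem (a : α) (f : F) : σ a ∈ (τ f).1 ↔ a ∈ f.1 := by
    have := φ.map_adj_iff (v := .inl a) (w := .inr f)
    rwa [hl, hr] at this
  have hsmul (f : F) : σ • f.1 = (τ f).1 := by
    ext a
    rw [← Finset.inv_smul_mem_iff, ← hmem, ← Perm.smul_def σ, smul_inv_smul]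
  have hσ : σ ∈ stabilizer (Perm α) F :=
    mem_stabilizer_finset'.2 fun f hf ↦ hsmul ⟨f, hf⟩ ▸ (τ ⟨f, hf⟩).2
  refine ⟨⟨σ, hσ⟩, ?_⟩
  ext (a | f)
  · exact (hl a).symm
  · exact (congrArg Sum.inr (Subtype.ext (hsmul f))).trans (hr f).symm

/-- If no point lies on as many faces as some face has points, an automorphism of the incidence
graph cannot swap the two sides, so it comes from a permutation of the points. -/
noncomputable def stabilizerEquivIncidenceGraphAut [Finite α]
    (hF : ∀ a, ∀ f ∈ F, #{g ∈ F | a ∈ g} ≠ #f) :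
    stabilizer (Perm α) F ≃* (incidenceGraph F ≃g incidenceGraph F) :=
  .ofBijective (stabilizerToIncidenceGraphAut F)
    ⟨stabilizerToIncidenceGraphAut_injective, stabilizerToIncidenceGraphAut_surjective hF⟩

end IncidenceGraph

theorem forall_mem_smul_finset {G β : Type*} [DecidableEq β] [SMul G β] {g : G} {s : Finset β}
    {p : β → Prop} : (∀ x ∈ g • s, p x) ↔ ∀ x ∈ s, p (g • x) :=
  Finset.forall_mem_image

section SetSystem

variable {α : Type*} [DecidableEq α]

/-- In the hemi-icosahedron the midpoint axes of two edges are orthogonal exactly when one edge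
joins the apexes of the two faces on the other. -/
def AreOrthogonal (F : Finset (Finset α)) (e d : Finset α) : Prop :=
  (∀ x ∈ d, insert x e ∈ F) ∨ ∀ x ∈ e, insert x d ∈ F

instance (F : Finset (Finset α)) (e d : Finset α) : Decidable (AreOrthogonal F e d) :=
  inferInstanceAs (Decidable (_ ∨ _))

theorem areOrthogonal_smul_iff {F : Finset (Finset α)} (σ : Perm α) {e d : Finset α} :
    AreOrthogonal (σ • F) (σ • e) (σ • d) ↔ AreOrthogonal F e d := by
  simp only [AreOrthogonal, forall_mem_smul_finset, ← Finset.smul_finset_insert,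
    Finset.smul_mem_smul_finset_iff]

variable [Fintype α]

/-- The orderings of the triangles of a set system whose members all have three points. -/
def orderedFaces (F : Finset (Finset α)) : Finset (Fin 3 → α) := {t | Finset.univ.image t ∈ F}

/-- A set system is thin if every finset is completed to a member by at most two points: this is
the pseudomanifold condition that a ridge lies in at most two facets. -/
def IsThin (F : Finset (Finset α)) : Prop :=
  ∀ s : Finset α, #{x | x ∉ s ∧ insert x s ∈ F} ≤ 2

theorem IsThin.apply_eq_of_insert_mem {F : Finset (Finset α)} (hF : IsThin F) {σ : Perm α}
    (hσ : σ • F = F) {s : Finset α} (hs : σ • s = s) {c d : α} (hc : c ∉ s) (hd : d ∉ s)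
    (hcF : insert c s ∈ F) (hdF : insert d s ∈ F) (hσc : σ c = c) : σ d = d := by
  have hσd : σ d ∉ s := by
    rw [← hs, ← Perm.smul_def, Finset.smul_mem_smul_finset_iff]
    exact hd
  have hσdF : insert (σ d) s ∈ F := by
    have := Finset.smul_mem_smul_finset (a := σ) hdF
    rwa [hσ, Finset.smul_finset_insert, hs] at this
  by_contra hne
  have hcd : c ≠ d := fun h ↦ hne (h ▸ hσc)
  have hcσd : c ≠ σ d := fun h ↦ hcd (σ.injective (hσc.trans h))
  have hsub : {c, d, σ d} ⊆ ({x | x ∉ s ∧ insert x s ∈ F} : Finset α) := by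
    simp [Finset.insert_subset_iff, *]
  have hthree : #{c, d, σ d} = 3 := Finset.card_eq_three.2 ⟨c, d, σ d, hcd, hcσd, Ne.symm hne, rfl⟩
  have := (Finset.card_le_card hsub).trans (hF s)
  omega

/-- The triples of mutually orthogonal edges: these are the orthogonal frames spanned by
2-fold axes of the icosahedron. -/
def frames (F : Finset (Finset α)) : Finset (Finset (Finset α)) :=
  {M ∈ (Finset.univ.powersetCard 2).powersetCard 3 |
    ∀ e ∈ M, ∀ d ∈ M, e ≠ d → AreOrthogonal F e d}

theorem smul_mem_frames_smul_iff {F : Finset (Finset α)} (σ : Perm α) {M : Finset (Finset α)} :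
    σ • M ∈ frames (σ • F) ↔ M ∈ frames F := by
  simp only [frames, Finset.mem_filter, Finset.mem_powersetCard, Finset.card_smul_finset,
    Finset.subset_iff, Finset.mem_univ, implies_true, true_and, forall_mem_smul_finset,
    areOrthogonal_smul_iff, ne_eq, smul_left_cancel_iff]

theorem stabilizer_le_stabilizer_frames (F : Finset (Finset α)) :
    stabilizer (Perm α) F ≤ stabilizer (Perm α) (frames F) := fun σ hσ ↦
  mem_stabilizer_finset.2 fun M ↦ by
    rw [← smul_mem_frames_smul_iff σ (M := M), mem_stabilizer_iff.1 hσ]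

/-- Symmetries of a set system permute its frames. -/
instance framesMulAction (F : Finset (Finset α)) :
    MulAction (stabilizer (Perm α) F) (frames F) :=
  compHom (frames F) (Subgroup.inclusion (stabilizer_le_stabilizer_frames F))

end SetSystem

section HemiIcosahedron

theorem piI_eq_incidenceGraph_faces : piI = incidenceGraph faces := by
  ext (v | f) (w | g) <;> simp [piI, piRel, incidenceGraph]

theorem card_filter_mem_faces_ne_card : ∀ v, ∀ f ∈ faces, #{g ∈ faces | v ∈ g} ≠ #f := by
  decide

theorem isThin_faces : IsThin faces := by
  unfold IsThin
  decide +kernel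

theorem card_orderedFaces_faces : #(orderedFaces faces) = 60 := by
  decide +kernel

theorem card_frames_faces : #(frames faces) = 5 := by
  decide +kernel

theorem eq_one_of_smul_faces_eq {σ : Perm (Fin 6)} (hσ : σ • faces = faces)
    (h0 : σ 0 = 0) (h1 : σ 1 = 1) (h2 : σ 2 = 2) : σ = 1 := by
  have hpair {a b : Fin 6} (ha : σ a = a) (hb : σ b = b) :
      σ • ({a, b} : Finset (Fin 6)) = {a, b} := by
    simp [Finset.smul_finset_insert, ha, hb]
  -- `3`, `4`, `5` are the apexes of the faces adjacent to `{0, 1, 2}` across its three edges.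
  have h3 : σ 3 = 3 := isThin_faces.apply_eq_of_insert_mem hσ (hpair h0 h2) (c := 1)
    (by decide) (by decide) (by decide) (by decide) h1
  have h4 : σ 4 = 4 := isThin_faces.apply_eq_of_insert_mem hσ (hpair h1 h2) (c := 0)
    (by decide) (by decide) (by decide) (by decide) h0
  have h5 : σ 5 = 5 := isThin_faces.apply_eq_of_insert_mem hσ (hpair h0 h1) (c := 2)
    (by decide) (by decide) (by decide) (by decide) h2
  ext v
  fin_cases v <;> simp [*]

theorem card_stabilizer_faces_le : Nat.card (stabilizer (Perm (Fin 6)) faces) ≤ 60 := by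
  have h012 : ![0, 1, 2] ∈ orderedFaces faces := by decide
  let image (σ : stabilizer (Perm (Fin 6)) faces) : orderedFaces faces :=
    ⟨(σ : Perm (Fin 6)) ∘ ![0, 1, 2], by
      rw [orderedFaces, Finset.mem_filter_univ] at h012 ⊢
      rw [← Finset.image_image]
      exact mem_stabilizer_finset'.1 σ.2 h012⟩
  have image_injective : Function.Injective image := by
    intro σ τ h
    have hfix (i : Fin 3) : (τ⁻¹ * σ : Perm (Fin 6)) (![0, 1, 2] i) = ![0, 1, 2] i :=
      Perm.inv_eq_iff_eq.2 (congrFun (congrArg Subtype.val h) i)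
    exact Subtype.ext <| (inv_mul_eq_one.1 <|
      eq_one_of_smul_faces_eq (τ⁻¹ * σ).2 (hfix 0) (hfix 1) (hfix 2)).symm
  calc Nat.card (stabilizer (Perm (Fin 6)) faces)
    _ ≤ Nat.card (orderedFaces faces) := Nat.card_le_card_of_injective image image_injective
    _ = 60 := by rw [Nat.card_eq_fintype_card, Fintype.card_coe, card_orderedFaces_faces]

/-- The rotation of order 5 about the vertex `0`. -/
def vertexRotation : stabilizer (Perm (Fin 6)) faces :=
  ⟨c[1, 2, 3, 4, 5], by rw [mem_stabilizer_iff]; decide⟩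

/-- The rotation of order 3 about the face `{0, 1, 2}`. -/
def faceRotation : stabilizer (Perm (Fin 6)) faces :=
  ⟨c[0, 1, 2] * c[3, 5, 4], by rw [mem_stabilizer_iff]; decide⟩

instance isPretransitive_frames_faces :
    IsPretransitive (stabilizer (Perm (Fin 6)) faces) (frames faces) where
  exists_smul_eq := by
    have vertexRotation_transitive :
        ∀ M N : frames faces, ∃ n : Fin 5, vertexRotation ^ (n : ℕ) • M = N := by
      decide +kernel
    intro M N
    obtain ⟨n, hn⟩ := vertexRotation_transitive M N
    exact ⟨vertexRotation ^ (n : ℕ), hn⟩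

theorem isThreeCycle_toPerm_faceRotation :
    (toPerm faceRotation : Perm (frames faces)).IsThreeCycle := by
  rw [← card_support_eq_three_iff]
  decide +kernel

theorem nonempty_stabilizer_faces_mulEquiv :
    Nonempty (stabilizer (Perm (Fin 6)) faces ≃* alternatingGroup (frames faces)) := by
  have hcard : Nat.card (frames faces) = 5 := by simp [card_frames_faces]
  have : Nontrivial (frames faces) := Finite.one_lt_card_iff_nontrivial.1 (by omega)
  have halt : Nat.card (alternatingGroup (frames faces)) = 60 := by
    rw [nat_card_alternatingGroup, hcard]
    rfl
  exact nonempty_mulEquiv_alternatingGroup (hcard ▸ Nat.prime_five)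
    isThreeCycle_toPerm_faceRotation (halt ▸ card_stabilizer_faces_le)

end HemiIcosahedron

/-- The automorphism group of `Π_I` is isomorphic to the alternating group `A₅`. -/
theorem stmt_0 : Nonempty ((piI ≃g piI) ≃* alternatingGroup (Fin 5)) := by
  rw [piI_eq_incidenceGraph_faces]
  obtain ⟨e⟩ := nonempty_stabilizer_faces_mulEquiv
  exact ⟨(stabilizerEquivIncidenceGraphAut card_filter_mem_faces_ne_card).symm.trans <|
    e.trans (Finset.equivFinOfCardEq card_frames_faces).altCongrHom⟩
end

section
/- There exists a simple graph on 16 vertices whose automorphism group is isomorphic to the alternating group A₄; in particular the minimal number of vertices of a graph with automorphism group A₄ is at most 16 (improving Babai's bound 2|A₄| = 24). -/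
/-- `μ G` is the minimal number of vertices of an undirected simple graph whose
automorphism group is isomorphic to `G`. -/
noncomputable def mu (G : Type*) [Group G] : ℕ :=
  sInf {n : ℕ | ∃ Γ : SimpleGraph (Fin n), Nonempty ((Γ ≃g Γ) ≃* G)}

/-!
`A₄` is the rotation group of the tetrahedron, that is, the group of permutations of its four
corners that preserve the set of oriented faces. The sixteen vertices of the graph are the four
corners `(i, i)` and the twelve darts `(i, j)`, `i ≠ j`. A dart is joined to the corner it points
to, to its reverse, and to its two neighbours on the oriented face to its left.

The only triangles of this graph are the faces. So an automorphism recognizes the darts as the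
vertices lying on triangles, and the reverse of a dart as the only adjacent dart having no common
neighbour with it. If `σ` is its action on corners, then it sends a dart with head `j` to one with
head `σ j`, and, as it commutes with reversal, it sends `(i, j)` to `(σ i, σ j)`. The remaining
edges then say that `σ` preserves the oriented faces.
-/

/-- Conjugation by a relation isomorphism, as an isomorphism of automorphism groups. -/
def relIsoAutCongr {α β : Type*} {r : α → α → Prop} {s : β → β → Prop} (e : r ≃r s) :
    (r ≃r r) ≃* (s ≃r s) where
  toFun φ := (e.symm.trans φ).trans e
  invFun φ := (e.trans φ).trans e.symm
  left_inv φ := by ext; simp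
  right_inv φ := by ext; simp
  map_mul' φ ψ := by ext; simp [RelIso.mul_apply]

lemma exists_fin_graph_aut_mulEquiv {V G : Type*} [Fintype V] [Group G] {n : ℕ}
    (hn : Fintype.card V = n) {Γ : SimpleGraph V} (e : (Γ ≃g Γ) ≃* G) :
    ∃ Γ' : SimpleGraph (Fin n), Nonempty ((Γ' ≃g Γ') ≃* G) :=
  ⟨Γ.overFin hn, ⟨(relIsoAutCongr (Γ.overFinIso hn)).symm.trans e⟩⟩

lemma exists_adj_adj_map_iff {V W : Type*} {G : SimpleGraph V} {H : SimpleGraph W}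
    (φ : G ≃g H) {v w : V} :
    (∃ u, H.Adj (φ v) u ∧ H.Adj u (φ w)) ↔ ∃ u, G.Adj v u ∧ G.Adj u w := by
  rw [φ.surjective.exists]
  simp only [φ.map_adj_iff]

section DartGraph

open Equiv MulAction
open scoped Pointwise

variable {V : Type*}

/-- `F` is a set of oriented triangles `(i, j, k)`, each listed in all three rotations, that covers
every dart of the complete graph on `V`, as the oriented faces of a tetrahedron do. -/
structure IsFaceSystem (F : Set (V × V × V)) : Prop where
  ne : ∀ {i j k}, (i, j, k) ∈ F → i ≠ j
  rotate : ∀ {i j k}, (i, j, k) ∈ F → (j, k, i) ∈ F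
  exists_mem : ∀ {i j}, i ≠ j → ∃ k, (i, j, k) ∈ F

/-- The directed edges of `dartGraph F`. A pair `(i, j)` stands for the dart from `i` to `j` if
`i ≠ j`, and for the corner `i` if `i = j`. The dart `(i, j)` leads to the corner `(j, j)`, to the
reverse dart `(j, i)`, and to the next dart `(j, k)` on each face `(i, j, k)`. -/
def DartStep (F : Set (V × V × V)) (p q : V × V) : Prop :=
  p.1 ≠ p.2 ∧ q.1 = p.2 ∧ (q.2 = p.2 ∨ q.2 = p.1 ∨ (p.1, p.2, q.2) ∈ F)

/-- The graph on the corners and darts of a set of oriented faces `F`, obtained from `DartStep F`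
by forgetting directions. -/
def dartGraph (F : Set (V × V × V)) : SimpleGraph (V × V) :=
  SimpleGraph.fromRel (DartStep F)

namespace dartGraph

variable {F : Set (V × V × V)} {p q r : V × V} {i j k : V}

lemma ne_of_step (h : DartStep F p q) : p ≠ q := by
  rintro rfl
  exact h.1 h.2.1

lemma adj_iff : (dartGraph F).Adj p q ↔ DartStep F p q ∨ DartStep F q p := by
  rw [dartGraph, SimpleGraph.fromRel_adj]
  exact and_iff_right_of_imp (Or.rec ne_of_step fun h => (ne_of_step h).symm)

lemma adj_corner_iff : (dartGraph F).Adj p (j, j) ↔ p.1 ≠ p.2 ∧ p.2 = j := by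
  rw [adj_iff]
  constructor
  · rintro (h | h)
    · exact ⟨h.1, h.2.1.symm⟩
    · exact absurd rfl h.1
  · rintro ⟨hp, rfl⟩
    exact .inl ⟨hp, rfl, .inl rfl⟩

lemma adj_swap (hp : p.1 ≠ p.2) : (dartGraph F).Adj p p.swap :=
  adj_iff.2 (.inl ⟨hp, rfl, .inr (.inl rfl)⟩)

lemma adj_of_mem (hF : IsFaceSystem F) (h : (i, j, k) ∈ F) :
    (dartGraph F).Adj (i, j) (j, k) :=
  adj_iff.2 (.inl ⟨hF.ne h, rfl, .inr (.inr h)⟩)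

lemma mem_iff_adj (hF : IsFaceSystem F) :
    (i, j, k) ∈ F ↔ i ≠ j ∧ j ≠ k ∧ k ≠ i ∧ (dartGraph F).Adj (i, j) (j, k) := by
  constructor
  · intro h
    exact ⟨hF.ne h, hF.ne (hF.rotate h), hF.ne (hF.rotate (hF.rotate h)), adj_of_mem hF h⟩
  · rw [adj_iff]
    rintro ⟨-, hjk, hki, ⟨-, -, hkj | hki' | h⟩ | ⟨-, hik, -⟩⟩
    · exact absurd hkj.symm hjk
    · exact absurd hki' hki
    · exact h
    · exact absurd hik.symm hki

lemma not_step_of_step_of_step (hpq : DartStep F p q) (hqr : DartStep F q r) :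
    ¬ DartStep F p r :=
  fun hpr => hqr.1 (hpq.2.1.trans (hpr.2.1.symm.trans hqr.2.1))

lemma step_cycle_of_triangle (hpq : (dartGraph F).Adj p q) (hqr : (dartGraph F).Adj q r)
    (hrp : (dartGraph F).Adj r p) :
    (DartStep F p q ∧ DartStep F q r ∧ DartStep F r p) ∨
      (DartStep F p r ∧ DartStep F r q ∧ DartStep F q p) := by
  rw [adj_iff] at hpq hqr hrp
  have no_shortcut : ∀ {x y z}, DartStep F x y → DartStep F y z → ¬ DartStep F x z :=
    not_step_of_step_of_step
  grind

lemma fst_ne_snd_of_triangle (hpq : (dartGraph F).Adj p q) (hqr : (dartGraph F).Adj q r)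
    (hrp : (dartGraph F).Adj r p) : p.1 ≠ p.2 := by
  obtain ⟨h, -, -⟩ | ⟨h, -, -⟩ := step_cycle_of_triangle hpq hqr hrp <;> exact h.1

lemma ne_swap_of_triangle (hpq : (dartGraph F).Adj p q) (hqr : (dartGraph F).Adj q r)
    (hrp : (dartGraph F).Adj r p) : q ≠ p.swap := by
  rintro rfl
  obtain ⟨-, hqr, hrp⟩ | ⟨hpr, hrq, -⟩ := step_cycle_of_triangle hpq hqr hrp
  · exact hrp.1 (hqr.2.1.trans hrp.2.1)
  · exact hrq.1 (hpr.2.1.trans hrq.2.1)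

lemma fst_ne_snd_iff_exists_triangle (hF : IsFaceSystem F) :
    p.1 ≠ p.2 ↔ ∃ q, (dartGraph F).Adj p q ∧
      ∃ r, (dartGraph F).Adj q r ∧ (dartGraph F).Adj r p := by
  constructor
  · intro hp
    obtain ⟨k, hk⟩ := hF.exists_mem hp
    exact ⟨_, adj_of_mem hF hk, _, adj_of_mem hF (hF.rotate hk),
      adj_of_mem hF (hF.rotate (hF.rotate hk))⟩
  · rintro ⟨q, hpq, r, hqr, hrp⟩
    exact fst_ne_snd_of_triangle hpq hqr hrp

lemma eq_swap_or_exists_triangle_of_step (hF : IsFaceSystem F) (hq : q.1 ≠ q.2)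
    (h : DartStep F p q) :
    q = p.swap ∨ ∃ r, (dartGraph F).Adj q r ∧ (dartGraph F).Adj r p := by
  obtain ⟨i, j⟩ := p
  obtain ⟨j', k⟩ := q
  obtain ⟨-, hj, hk⟩ := h
  obtain rfl : j' = j := hj
  obtain hkj | hki | hface := hk
  · exact absurd hkj.symm hq
  · exact .inl (Prod.ext rfl hki)
  · exact .inr ⟨(k, i), adj_of_mem hF (hF.rotate hface),
      adj_of_mem hF (hF.rotate (hF.rotate hface))⟩

lemma eq_swap_iff (hF : IsFaceSystem F) (hp : p.1 ≠ p.2) :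
    q = p.swap ↔ q.1 ≠ q.2 ∧ (dartGraph F).Adj p q ∧
      ¬ ∃ r, (dartGraph F).Adj q r ∧ (dartGraph F).Adj r p := by
  constructor
  · rintro rfl
    refine ⟨hp.symm, adj_swap hp, ?_⟩
    rintro ⟨r, hqr, hrp⟩
    exact ne_swap_of_triangle (adj_swap hp) hqr hrp rfl
  · rintro ⟨hq, hpq, no_triangle⟩
    obtain h | h := adj_iff.1 hpq
    · exact (eq_swap_or_exists_triangle_of_step hF hq h).resolve_right no_triangle
    · obtain rfl | ⟨r, hpr, hrq⟩ := eq_swap_or_exists_triangle_of_step hF hp h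
      · rfl
      · exact absurd ⟨r, hrq.symm, hpr.symm⟩ no_triangle

lemma step_smul_iff {σ : Perm V} (hσ : σ ∈ stabilizer (Perm V) F) :
    DartStep F (σ • p) (σ • q) ↔ DartStep F p q := by
  have hface := mem_stabilizer_set.1 hσ (p.1, p.2, q.2)
  simp only [Prod.smul_mk, Perm.smul_def] at hface
  simp only [DartStep, Prod.smul_fst, Prod.smul_snd, Perm.smul_def, ne_eq, σ.injective.eq_iff,
    hface]

/-- The diagonal action on `V × V` of the permutations preserving `F`, as automorphisms of
`dartGraph F`. -/
def stabilizerHom (F : Set (V × V × V)) :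
    stabilizer (Perm V) F →* (dartGraph F ≃g dartGraph F) where
  toFun σ :=
    { toEquiv := MulAction.toPerm σ
      map_rel_iff' :=
        adj_iff.trans <| (or_congr (step_smul_iff σ.2) (step_smul_iff σ.2)).trans adj_iff.symm }
  map_one' := rfl
  map_mul' _ _ := rfl

lemma stabilizerHom_injective : Function.Injective (stabilizerHom F) := by
  intro σ τ h
  ext i
  exact congrArg Prod.fst (DFunLike.congr_fun h (i, i))

lemma aut_fst_ne_snd_iff (hF : IsFaceSystem F) (φ : dartGraph F ≃g dartGraph F) :
    (φ p).1 ≠ (φ p).2 ↔ p.1 ≠ p.2 := by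
  rw [fst_ne_snd_iff_exists_triangle hF, fst_ne_snd_iff_exists_triangle hF, φ.surjective.exists]
  simp only [φ.map_adj_iff, exists_adj_adj_map_iff φ]

lemma aut_corner_eq (hF : IsFaceSystem F) (φ : dartGraph F ≃g dartGraph F) (i : V) :
    φ (i, i) = ((φ (i, i)).1, (φ (i, i)).1) :=
  Prod.ext rfl (not_ne_iff.1 (mt (aut_fst_ne_snd_iff hF φ).1 (not_ne_iff.2 rfl))).symm

lemma aut_swap (hF : IsFaceSystem F) (φ : dartGraph F ≃g dartGraph F) (p : V × V) :
    φ p.swap = (φ p).swap := by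
  by_cases hp : p.1 = p.2
  · obtain ⟨i, j⟩ := p
    obtain rfl : i = j := hp
    rw [Prod.swap_prod_mk, aut_corner_eq hF, Prod.swap_prod_mk]
  · rw [eq_swap_iff hF ((aut_fst_ne_snd_iff hF φ).2 hp), aut_fst_ne_snd_iff hF]
    rw [φ.map_adj_iff, exists_adj_adj_map_iff φ]
    exact (eq_swap_iff hF hp).1 rfl

/-- The permutation of the corners induced by an automorphism of `dartGraph F`. -/
def cornerPerm (hF : IsFaceSystem F) (φ : dartGraph F ≃g dartGraph F) : Perm V where
  toFun i := (φ (i, i)).1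
  invFun i := (φ.symm (i, i)).1
  left_inv i := by
    change (φ.symm ((φ (i, i)).1, (φ (i, i)).1)).1 = i
    rw [← aut_corner_eq hF φ, φ.symm_apply_apply]
  right_inv i := by
    change (φ ((φ.symm (i, i)).1, (φ.symm (i, i)).1)).1 = i
    rw [← aut_corner_eq hF φ.symm, φ.apply_symm_apply]

lemma aut_corner (hF : IsFaceSystem F) (φ : dartGraph F ≃g dartGraph F) (i : V) :
    φ (i, i) = (cornerPerm hF φ i, cornerPerm hF φ i) :=
  aut_corner_eq hF φ i

lemma aut_snd (hF : IsFaceSystem F) (φ : dartGraph F ≃g dartGraph F) (p : V × V) :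
    (φ p).2 = cornerPerm hF φ p.2 := by
  by_cases hp : p.1 = p.2
  · obtain ⟨i, j⟩ := p
    obtain rfl : i = j := hp
    rw [aut_corner hF]
  · have h : (dartGraph F).Adj p (p.2, p.2) := adj_corner_iff.2 ⟨hp, rfl⟩
    rw [← φ.map_adj_iff, aut_corner hF] at h
    exact (adj_corner_iff.1 h).2

lemma aut_apply (hF : IsFaceSystem F) (φ : dartGraph F ≃g dartGraph F) (p : V × V) :
    φ p = (cornerPerm hF φ p.1, cornerPerm hF φ p.2) := by
  refine Prod.ext ?_ (aut_snd hF φ p)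
  calc (φ p).1 = (φ p.swap).2 := by rw [aut_swap hF, Prod.snd_swap]
    _ = cornerPerm hF φ p.1 := aut_snd hF φ p.swap

lemma cornerPerm_mem_stabilizer (hF : IsFaceSystem F) (φ : dartGraph F ≃g dartGraph F) :
    cornerPerm hF φ ∈ stabilizer (Perm V) F := by
  rw [mem_stabilizer_set]
  rintro ⟨i, j, k⟩
  have hadj : (dartGraph F).Adj (φ (i, j)) (φ (j, k)) ↔ (dartGraph F).Adj (i, j) (j, k) :=
    φ.map_adj_iff
  rw [aut_apply hF, aut_apply hF] at hadj
  simp only [Prod.smul_mk, Perm.smul_def, mem_iff_adj hF, hadj, ne_eq,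
    (cornerPerm hF φ).injective.eq_iff]

lemma stabilizerHom_surjective (hF : IsFaceSystem F) : Function.Surjective (stabilizerHom F) :=
  fun φ => ⟨⟨cornerPerm hF φ, cornerPerm_mem_stabilizer hF φ⟩,
    RelIso.ext fun p => (aut_apply hF φ p).symm⟩

/-- The automorphisms of `dartGraph F` are exactly the permutations of the corners preserving
`F`. -/
noncomputable def stabilizerEquivAut (hF : IsFaceSystem F) :
    stabilizer (Perm V) F ≃* (dartGraph F ≃g dartGraph F) :=
  MulEquiv.ofBijective (stabilizerHom F) ⟨stabilizerHom_injective, stabilizerHom_surjective hF⟩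

end dartGraph

end DartGraph

section Tetrahedron

open Equiv MulAction
open scoped Pointwise

/-- The oriented faces of the tetrahedron with corners `0, 1, 2, 3`, as the rotated images of the
face `(0, 1, 2)`. -/
def tetrahedronFaces : Set (Fin 4 × Fin 4 × Fin 4) :=
  orbit (alternatingGroup (Fin 4)) (0, 1, 2)

lemma mem_tetrahedronFaces_iff {i j k : Fin 4} :
    (i, j, k) ∈ tetrahedronFaces ↔
      ∃ σ : alternatingGroup (Fin 4), σ • 0 = i ∧ σ • 1 = j ∧ σ • 2 = k := by
  simp only [tetrahedronFaces, mem_orbit_iff, Prod.smul_mk, Prod.mk.injEq]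

lemma stabilizer_tetrahedronFaces :
    stabilizer (Perm (Fin 4)) tetrahedronFaces = alternatingGroup (Fin 4) := by
  have hfix : stabilizer (Perm (Fin 4)) ((0, 1, 2) : Fin 4 × Fin 4 × Fin 4) = ⊥ := by
    rw [eq_bot_iff]
    intro σ hσ
    obtain ⟨h0, h1, h2⟩ : σ 0 = 0 ∧ σ 1 = 1 ∧ σ 2 = 2 := by simpa [Prod.smul_mk] using hσ
    have hsupp : σ.support ⊆ {3} := by
      intro i hi
      fin_cases i <;> simp_all
    exact Perm.card_support_le_one.1 (Finset.card_le_card hsupp)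
  exact stabilizer_orbit_eq (hfix.trans_le bot_le)

lemma isFaceSystem_tetrahedronFaces : IsFaceSystem tetrahedronFaces where
  ne h := by
    obtain ⟨σ, rfl, rfl, -⟩ := mem_tetrahedronFaces_iff.1 h
    exact (MulAction.injective σ).ne zero_ne_one
  rotate h := by
    obtain ⟨σ, rfl, rfl, rfl⟩ := mem_tetrahedronFaces_iff.1 h
    let ρ : alternatingGroup (Fin 4) := ⟨c[0, 1, 2], Perm.mem_alternatingGroup.2 (by decide)⟩
    exact mem_tetrahedronFaces_iff.2 ⟨σ * ρ, rfl, rfl, rfl⟩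
  exists_mem hij := by
    have two_transitive : IsMultiplyPretransitive (alternatingGroup (Fin 4)) (Fin 4) 2 := by
      simpa using alternatingGroup.isMultiplyPretransitive (Fin 4)
    obtain ⟨σ, h0, h1⟩ := is_two_pretransitive_iff.1 two_transitive zero_ne_one hij
    exact ⟨σ • 2, mem_tetrahedronFaces_iff.2 ⟨σ, h0, h1, rfl⟩⟩

end Tetrahedron

/-- There is a simple graph on 16 vertices with automorphism group isomorphic to `A₄`;
in particular `μ(A₄) ≤ 16`. -/
theorem stmt_3 :
    (∃ Γ : SimpleGraph (Fin 16), Nonempty ((Γ ≃g Γ) ≃* alternatingGroup (Fin 4))) ∧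
      mu (alternatingGroup (Fin 4)) ≤ 16 := by
  let aut_equiv : (dartGraph tetrahedronFaces ≃g dartGraph tetrahedronFaces) ≃*
      alternatingGroup (Fin 4) :=
    (dartGraph.stabilizerEquivAut isFaceSystem_tetrahedronFaces).symm.trans
      (MulEquiv.subgroupCongr stabilizer_tetrahedronFaces)
  have hex := exists_fin_graph_aut_mulEquiv (n := 16) (by simp) aut_equiv
  exact ⟨hex, Nat.sInf_le hex⟩
end

section
/- The automorphism group of the graph Π_I acts transitively on its edges: for any two edges {u₁,f₁} and {u₂,f₂} of Π_I there is an automorphism of Π_I carrying the first edge to the second. -/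
/-!
Edges of `Π_I` are the flags (incident vertex-face pairs) of the hemi-icosahedron, so it suffices
that the automorphisms of the hemi-icosahedron permute its flags transitively. The rotation of
order five about the vertex `0` cycles the other five vertices, and a half-turn carries `0` to
`1`, so all vertices are equivalent; the same rotation fixes `0` and cycles the five faces
around it.
-/

open scoped Pointwise

theorem exists_smul_eq_and_smul_eq_of_rel {G α β : Type*} [Group G] [MulAction G α] [MulAction G β]
    [MulAction.IsPretransitive G α] {r : α → β → Prop}
    (smul_rel : ∀ (g : G) {a b}, r a b → r (g • a) (g • b)) {a₀ : α} {b₀ : β}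
    (fiber_transitive : ∀ b, r a₀ b → ∃ g ∈ MulAction.stabilizer G a₀, g • b₀ = b)
    {a₁ a₂ : α} {b₁ b₂ : β} (h₁ : r a₁ b₁) (h₂ : r a₂ b₂) :
    ∃ g : G, g • a₁ = a₂ ∧ g • b₁ = b₂ := by
  have from_base {a b} (h : r a b) : ∃ g : G, g • a₀ = a ∧ g • b₀ = b := by
    obtain ⟨g, rfl⟩ := MulAction.exists_smul_eq G a₀ a
    have h_fiber : r a₀ (g⁻¹ • b) := by simpa only [inv_smul_smul] using smul_rel g⁻¹ h
    obtain ⟨k, hka, hkb⟩ := fiber_transitive _ h_fiber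
    exact ⟨g * k, by rw [mul_smul, hka], by rw [mul_smul, hkb, smul_inv_smul]⟩
  obtain ⟨g₁, rfl, rfl⟩ := from_base h₁
  obtain ⟨g₂, rfl, rfl⟩ := from_base h₂
  exact ⟨g₂ * g₁⁻¹, by rw [mul_smul, inv_smul_smul], by rw [mul_smul, inv_smul_smul]⟩

/-- The automorphism group of the hemi-icosahedron, encoded as the group of those vertex
permutations that preserve the set of faces. -/
abbrev HemiIcosahedronAut : Subgroup (Equiv.Perm (Fin 6)) :=
  MulAction.stabilizer (Equiv.Perm (Fin 6)) faces

namespace HemiIcosahedronAut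

/-- The rotation of order five about the vertex `0`; it cycles the remaining vertices and the five
faces around `0`. -/
def rotation : HemiIcosahedronAut :=
  ⟨c[1, 2, 3, 4, 5], MulAction.mem_stabilizer_iff.mpr (by decide)⟩

/-- The half-turn about the midpoint of the edge `{3, 4}`, chosen because it moves the centre `0` of
`rotation` to another vertex. -/
def halfTurn : HemiIcosahedronAut :=
  ⟨c[0, 1] * c[3, 4], MulAction.mem_stabilizer_iff.mpr (by decide)⟩

theorem rotation_mem_stabilizer_zero :
    rotation ∈ MulAction.stabilizer HemiIcosahedronAut (0 : Fin 6) :=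
  MulAction.mem_stabilizer_iff.mpr (by decide)

theorem halfTurn_smul_zero : halfTurn • (0 : Fin 6) = 1 := by
  decide

theorem exists_rotation_pow_smul_one_eq :
    ∀ v : Fin 6, v ≠ 0 → ∃ k : Fin 5, rotation ^ (k : ℕ) • (1 : Fin 6) = v := by
  decide

theorem exists_rotation_pow_smul_face_eq :
    ∀ f ∈ faces, 0 ∈ f → ∃ k : Fin 5, rotation ^ (k : ℕ) • ({0, 1, 2} : Finset (Fin 6)) = f := by
  decide

instance isPretransitive_vertices : MulAction.IsPretransitive HemiIcosahedronAut (Fin 6) := by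
  refine (MulAction.isPretransitive_iff_base 0).mpr fun v => ?_
  obtain rfl | hv := eq_or_ne v 0
  · exact ⟨1, one_smul _ _⟩
  · obtain ⟨k, hk⟩ := exists_rotation_pow_smul_one_eq v hv
    exact ⟨rotation ^ (k : ℕ) * halfTurn, by rw [mul_smul, halfTurn_smul_zero, hk]⟩

theorem smul_mem_faces_iff (g : HemiIcosahedronAut) {f : Finset (Fin 6)} :
    g • f ∈ faces ↔ f ∈ faces :=
  MulAction.mem_stabilizer_finset.mp g.2 f

theorem exists_smul_flag_eq {v₁ v₂ : Fin 6} {f₁ f₂ : Finset (Fin 6)}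
    (hf₁ : f₁ ∈ faces) (hv₁ : v₁ ∈ f₁) (hf₂ : f₂ ∈ faces) (hv₂ : v₂ ∈ f₂) :
    ∃ g : HemiIcosahedronAut, g • v₁ = v₂ ∧ g • f₁ = f₂ := by
  let IsFlag (v : Fin 6) (f : Finset (Fin 6)) : Prop := f ∈ faces ∧ v ∈ f
  have smul_isFlag (g : HemiIcosahedronAut) {v f} (h : IsFlag v f) : IsFlag (g • v) (g • f) :=
    ⟨(smul_mem_faces_iff g).mpr h.1, Finset.smul_mem_smul_finset h.2⟩
  have faces_at_zero (f) (h : IsFlag 0 f) :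
      ∃ g ∈ MulAction.stabilizer HemiIcosahedronAut (0 : Fin 6), g • {0, 1, 2} = f := by
    obtain ⟨k, hk⟩ := exists_rotation_pow_smul_face_eq f h.1 h.2
    exact ⟨_, pow_mem rotation_mem_stabilizer_zero k, hk⟩
  exact exists_smul_eq_and_smul_eq_of_rel smul_isFlag faces_at_zero ⟨hf₁, hv₁⟩ ⟨hf₂, hv₂⟩

end HemiIcosahedronAut

theorem piI_adj_inl_inr {v : Fin 6} {f : {f // f ∈ faces}} :
    piI.Adj (Sum.inl v) (Sum.inr f) ↔ v ∈ f.1 := by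
  simp [piI, piRel]

theorem not_piI_adj_inl_inl {v w : Fin 6} : ¬piI.Adj (Sum.inl v) (Sum.inl w) := by
  simp [piI, piRel]

theorem not_piI_adj_inr_inr {f f' : {f // f ∈ faces}} : ¬piI.Adj (Sum.inr f) (Sum.inr f') := by
  simp [piI, piRel]

theorem exists_flag_of_mem_piI_edgeSet {e : Sym2 V16} (he : e ∈ piI.edgeSet) :
    ∃ (v : Fin 6) (f : {f // f ∈ faces}), v ∈ f.1 ∧ e = s(Sum.inl v, Sum.inr f) := by
  induction e with
  | h a b =>
    rw [SimpleGraph.mem_edgeSet] at he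
    rcases a with v | f <;> rcases b with w | f'
    · exact absurd he not_piI_adj_inl_inl
    · exact ⟨v, f', piI_adj_inl_inr.mp he, rfl⟩
    · exact ⟨w, f, piI_adj_inl_inr.mp he.symm, Sym2.eq_swap⟩
    · exact absurd he not_piI_adj_inr_inr

/-- The automorphism of `Π_I` induced by an automorphism of the hemi-icosahedron, acting on
vertices and faces separately. -/
def HemiIcosahedronAut.toPiIso (g : HemiIcosahedronAut) : piI ≃g piI where
  toEquiv := Equiv.sumCongr (MulAction.toPerm g)
    ((MulAction.toPerm g).subtypeEquiv fun _ => (smul_mem_faces_iff g).symm)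
  map_rel_iff' := by
    have mem_iff (v : Fin 6) (f : Finset (Fin 6)) : g • v ∈ g • f ↔ v ∈ f :=
      Finset.smul_mem_smul_finset_iff g.1
    rintro (v | f) (w | f')
    · exact iff_of_false not_piI_adj_inl_inl not_piI_adj_inl_inl
    · exact piI_adj_inl_inr.trans ((mem_iff v f'.1).trans piI_adj_inl_inr.symm)
    · rw [piI.adj_comm, piI.adj_comm (Sum.inr f)]
      exact piI_adj_inl_inr.trans ((mem_iff w f.1).trans piI_adj_inl_inr.symm)
    · exact iff_of_false not_piI_adj_inr_inr not_piI_adj_inr_inr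

/-- The automorphism group of `Π_I` acts transitively on the edges of `Π_I`. -/
theorem stmt_10 :
    ∀ e₁ ∈ piI.edgeSet, ∀ e₂ ∈ piI.edgeSet,
      ∃ φ : piI ≃g piI, Sym2.map (⇑φ) e₁ = e₂ := by
  intro e₁ he₁ e₂ he₂
  obtain ⟨v₁, ⟨f₁, hf₁⟩, hv₁, rfl⟩ := exists_flag_of_mem_piI_edgeSet he₁
  obtain ⟨v₂, ⟨f₂, hf₂⟩, hv₂, rfl⟩ := exists_flag_of_mem_piI_edgeSet he₂
  obtain ⟨g, rfl, rfl⟩ := HemiIcosahedronAut.exists_smul_flag_eq hf₁ hv₁ hf₂ hv₂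
  exact ⟨HemiIcosahedronAut.toPiIso g, rfl⟩
end
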